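/- For every y > 0: Z(y) − (q/Φ) W(y) − ∫_{(0,∞)} [ W(y)·(1 − e^{−Φu})/Φ − ∫_0^{min(u,y)} W(y−w) dw ] Π(du) = (σ²/2) ( W'(y) − Φ W(y) ). -/

import Mathlib

open MeasureTheory Real Set Filter

/-- Laplace exponent `ψ(β) = cβ + (σ²/2)β² + ∫_{(0,∞)} (e^{−βz} − 1 + βz 1_{(0,1)}(z)) ν(dz)`. -/
noncomputable def laplaceExponent (c σ : ℝ) (ν : Measure ℝ) (β : ℝ) : ℝ :=
  c * β + σ ^ 2 / 2 * β ^ 2 +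
    ∫ z in Set.Ioi (0:ℝ),
      (Real.exp (-β * z) - 1 + Set.indicator (Set.Ioo (0:ℝ) 1) (fun w => β * w) z) ∂ν

/-- `Z(x) = 1 + q ∫_0^{max(x,0)} W(y) dy`. -/
noncomputable def Zfun (q : ℝ) (W : ℝ → ℝ) (x : ℝ) : ℝ :=
  1 + q * ∫ y in (0:ℝ)..(max x 0), W y

theorem laplace_unique (Φ : ℝ) (f : ℝ → ℝ)
    (hint : ∀ β > Φ, IntegrableOn (fun y => Real.exp (-β * y) * f y) (Ioi 0))
    (hz : ∀ β > Φ, ∫ y in Ioi (0:ℝ), Real.exp (-β * y) * f y = 0) :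
    ∀ᵐ y ∂(volume.restrict (Ioi (0:ℝ))), f y = 0 := by
  set g : ℝ → ℝ := fun y => Real.exp (-(Φ+1) * y) * f y with hg
  have hgi : Integrable g (volume.restrict (Ioi 0)) := hint (Φ+1) (by linarith)
  set lam := volume.restrict (Ioi (0:ℝ)) with hlam
  set p : ℝ → ENNReal := fun y => ENNReal.ofReal (g y) with hp
  set m : ℝ → ENNReal := fun y => ENNReal.ofReal (-g y) with hm
  have hpm : AEMeasurable p lam := hgi.aemeasurable.ennreal_ofReal
  have hmm : AEMeasurable m lam := hgi.aemeasurable.neg.ennreal_ofReal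
  have hpf : ∫⁻ y, p y ∂lam ≠ ⊤ := (hgi.lintegral_lt_top).ne
  have hmf : ∫⁻ y, m y ∂lam ≠ ⊤ := (hgi.neg.lintegral_lt_top).ne
  have : IsFiniteMeasure (lam.withDensity p) := isFiniteMeasure_withDensity hpf
  have : IsFiniteMeasure (lam.withDensity m) := isFiniteMeasure_withDensity hmf
  have key : ∀ t < (1:ℝ), Integrable (fun y => Real.exp (t * y) * g y) lam ∧
      ∫ y, Real.exp (t * y) * g y ∂lam = 0 := by
    intro t ht
    have e : (fun y => Real.exp (t * y) * g y) = fun y => Real.exp (-(Φ + 1 - t) * y) * f y := by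
      funext y
      simp only [hg, ← mul_assoc, ← Real.exp_add]
      ring_nf
    rw [e]
    exact ⟨hint _ (by linarith), hz _ (by linarith)⟩
  have intp : ∀ t < (1:ℝ), Integrable (fun y => Real.exp (t * y)) (lam.withDensity p) := by
    intro t ht
    rw [integrable_withDensity_iff_integrable_smul₀' hpm (by simp [hp])]
    refine (key t ht).1.mono (by 
      refine AEStronglyMeasurable.smul hpm.ennreal_toReal.aestronglyMeasurable (by fun_prop)) ?_
    refine Eventually.of_forall fun y => ?_
    simp only [hp, smul_eq_mul, norm_mul, Real.norm_eq_abs, ENNReal.toReal_ofReal']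
    rw [mul_comm]
    refine mul_le_mul_of_nonneg_left ?_ (abs_nonneg _)
    have h0 : 0 ≤ max (g y) 0 := le_max_right _ _
    rw [abs_of_nonneg h0]
    exact max_le (le_abs_self _) (abs_nonneg _)
  have intm : ∀ t < (1:ℝ), Integrable (fun y => Real.exp (t * y)) (lam.withDensity m) := by
    intro t ht
    rw [integrable_withDensity_iff_integrable_smul₀' hmm (by simp [hm])]
    refine (key t ht).1.mono (by 
      refine AEStronglyMeasurable.smul hmm.ennreal_toReal.aestronglyMeasurable (by fun_prop)) ?_
    refine Eventually.of_forall fun y => ?_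
    simp only [hm, smul_eq_mul, norm_mul, Real.norm_eq_abs, ENNReal.toReal_ofReal']
    rw [mul_comm]
    refine mul_le_mul_of_nonneg_left ?_ (abs_nonneg _)
    have h0 : 0 ≤ max (-g y) 0 := le_max_right _ _
    rw [abs_of_nonneg h0]
    exact max_le (neg_le_abs _) (abs_nonneg _)
  have mgfeq : ∀ t < (1:ℝ), ProbabilityTheory.mgf id (lam.withDensity p) t =
      ProbabilityTheory.mgf id (lam.withDensity m) t := by
    intro t ht
    have hip := intp t ht
    have him := intm t ht
    rw [integrable_withDensity_iff_integrable_smul₀' hpm (by simp [hp])] at hip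
    rw [integrable_withDensity_iff_integrable_smul₀' hmm (by simp [hm])] at him
    simp only [ProbabilityTheory.mgf, id]
    rw [integral_withDensity_eq_integral_toReal_smul₀ hpm (by simp [hp]),
      integral_withDensity_eq_integral_toReal_smul₀ hmm (by simp [hm]), ← sub_eq_zero,
      ← integral_sub hip him, ← (key t ht).2]
    refine integral_congr_ae (Eventually.of_forall fun y => ?_)
    simp only [hp, hm, smul_eq_mul, ENNReal.toReal_ofReal']
    rcases le_total 0 (g y) with h | h
    · rw [max_eq_left h, max_eq_right (by linarith)]; ring
    · rw [max_eq_right h, max_eq_left (by linarith)]; ring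
  have subp : Iio (1:ℝ) ⊆ interior (ProbabilityTheory.integrableExpSet id (lam.withDensity p)) :=
    interior_maximal (fun t ht => intp t ht) isOpen_Iio
  have subm : Iio (1:ℝ) ⊆ interior (ProbabilityTheory.integrableExpSet id (lam.withDensity m)) :=
    interior_maximal (fun t ht => intm t ht) isOpen_Iio
  have hX : AnalyticOnNhd ℂ (ProbabilityTheory.complexMGF id (lam.withDensity p))
      {z | z.re ∈ Iio (1:ℝ)} :=
    ProbabilityTheory.analyticOnNhd_complexMGF.mono fun z hz => subp hz
  have hY : AnalyticOnNhd ℂ (ProbabilityTheory.complexMGF id (lam.withDensity m))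
      {z | z.re ∈ Iio (1:ℝ)} :=
    ProbabilityTheory.analyticOnNhd_complexMGF.mono fun z hz => subm hz
  have hEq := AnalyticOnNhd.eqOn_of_preconnected_of_frequently_eq hX hY
    ((convex_Iio (1:ℝ)).linear_preimage Complex.reLm).isPreconnected
    (z₀ := ((0:ℝ) : ℂ)) (by simp) (by
      have h_real : ∃ᶠ (x : ℝ) in nhdsWithin 0 {0}ᶜ, 
          ProbabilityTheory.complexMGF id (lam.withDensity p) x
          = ProbabilityTheory.complexMGF id (lam.withDensity m) x := by
        refine Eventually.frequently ?_
        filter_upwards [mem_nhdsWithin_of_mem_nhds (Iio_mem_nhds (show (0:ℝ) < 1 by norm_num))]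
          with x hx
        rw [ProbabilityTheory.complexMGF_ofReal, ProbabilityTheory.complexMGF_ofReal, mgfeq x hx]
      rw [frequently_iff_seq_forall] at h_real ⊢
      obtain ⟨xs, hx_tendsto, hx_eq⟩ := h_real
      refine ⟨fun n ↦ xs n, ?_, fun n ↦ ?_⟩
      · rw [tendsto_nhdsWithin_iff] at hx_tendsto ⊢
        constructor
        · exact (Complex.continuous_ofReal.tendsto 0).comp hx_tendsto.1
        · simpa using hx_tendsto.2
      · simp [hx_eq])
  have hμ : lam.withDensity p = lam.withDensity m := by
    apply Measure.ext_of_charFun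
    funext t
    have := hEq (x := (t:ℂ) * Complex.I) (by simp)
    rw [← ProbabilityTheory.complexMGF_id_mul_I, ← ProbabilityTheory.complexMGF_id_mul_I]
    exact this
  rw [withDensity_eq_iff hpm hmm hpf] at hμ
  filter_upwards [hμ] with y h
  simp only [hp, hm] at h
  have hg0 : g y = 0 := by
    rcases le_total 0 (g y) with h1 | h1
    · rw [ENNReal.ofReal_of_nonpos (p := -g y) (by linarith), ENNReal.ofReal_eq_zero] at h
      linarith
    · rw [ENNReal.ofReal_of_nonpos h1, eq_comm, ENNReal.ofReal_eq_zero] at h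
      linarith
  simpa [hg, Real.exp_ne_zero] using hg0

theorem init_value (Φ : ℝ) (hΦ : 0 < Φ) (W : ℝ → ℝ)
    (hWc : ContinuousOn W (Set.Ici 0)) (hWm : MonotoneOn W (Set.Ici 0))
    (hLI : ∀ β > Φ, IntegrableOn (fun w => Real.exp (-β * w) * W w) (Ioi 0)) :
    Tendsto (fun β => β * ∫ w in Ioi (0:ℝ), Real.exp (-β * w) * W w) atTop (nhds (W 0)) := by
  set b := Φ + 1 with hb
  have hb0 : 0 < b := by linarith
  have hI : ∀ β ≥ b, IntegrableOn (fun s => Real.exp (-s) * W (β⁻¹ * s)) (Ioi 0) := by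
    intro β hβ
    have hβ0 : 0 < β := by linarith
    have h := (integrableOn_Ioi_comp_mul_left_iff (fun w => Real.exp (-β * w) * W w) 0
      (inv_pos.2 hβ0)).2 (by simpa using hLI β (by linarith))
    refine h.congr (Eventually.of_forall fun s => ?_)
    simp only
    congr 2
    field_simp
  have hE : ∀ β ≥ b, (β * ∫ w in Ioi (0:ℝ), Real.exp (-β * w) * W w) =
      ∫ s in Ioi (0:ℝ), Real.exp (-s) * W (β⁻¹ * s) := by
    intro β hβ
    have hβ0 : 0 < β := by linarith
    have h := integral_comp_mul_left_Ioi (fun w => Real.exp (-β * w) * W w) 0 (inv_pos.2 hβ0)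
    simp only [mul_zero, inv_inv, smul_eq_mul] at h
    rw [← h]
    refine integral_congr_ae (Eventually.of_forall fun s => ?_)
    simp only
    congr 2
    field_simp
  have hlim : Tendsto (fun β : ℝ => ∫ s in Ioi (0:ℝ), Real.exp (-s) * W (β⁻¹ * s)) atTop
      (nhds (∫ s in Ioi (0:ℝ), Real.exp (-s) * W 0)) := by
    refine tendsto_integral_filter_of_dominated_convergence
      (fun s => Real.exp (-s) * (2 * |W 0|) + Real.exp (-s) * W (b⁻¹ * s)) ?_ ?_ ?_ ?_
    · filter_upwards [eventually_ge_atTop b] with β hβ using (hI β hβ).aestronglyMeasurable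
    · filter_upwards [eventually_ge_atTop b] with β hβ
      filter_upwards [ae_restrict_mem measurableSet_Ioi] with s hs
      have hs0 : (0:ℝ) < s := hs
      have hβ0 : 0 < β := by linarith
      have h1 : W (β⁻¹ * s) ≤ W (b⁻¹ * s) := by
        apply hWm
        · exact (show (0:ℝ) ≤ β⁻¹ * s by positivity)
        · exact (show (0:ℝ) ≤ b⁻¹ * s by positivity)
        · gcongr
      have h2 : W 0 ≤ W (β⁻¹ * s) := by
        apply hWm
        · exact self_mem_Ici
        · exact (show (0:ℝ) ≤ β⁻¹ * s by positivity)
        · positivity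
      rw [norm_mul, Real.norm_of_nonneg (Real.exp_pos _).le, ← mul_add]
      gcongr
      rw [Real.norm_eq_abs, abs_le]
      have := neg_abs_le (W 0)
      have := le_abs_self (W 0)
      have := abs_nonneg (W 0)
      constructor <;> linarith
    · refine Integrable.add ?_ (hI b le_rfl)
      exact (integrableOn_exp_neg_Ioi 0).mul_const _
    · filter_upwards [ae_restrict_mem measurableSet_Ioi] with s hs
      have hs0 : (0:ℝ) < s := hs
      refine Tendsto.const_mul _ ?_
      have hw : Tendsto W (nhdsWithin 0 (Ici 0)) (nhds (W 0)) := hWc 0 self_mem_Ici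
      refine hw.comp ?_
      refine tendsto_nhdsWithin_iff.2 ⟨?_, ?_⟩
      · simpa using (tendsto_inv_atTop_zero (𝕜 := ℝ)).mul_const s
      · filter_upwards [eventually_gt_atTop 0] with β hβ
        exact (show (0:ℝ) ≤ β⁻¹ * s by positivity)
  rw [integral_mul_const, integral_exp_neg_Ioi_zero, one_mul] at hlim
  refine hlim.congr' ?_
  filter_upwards [eventually_ge_atTop b] with β hβ using (hE β hβ).symm

theorem exp_bound (W : ℝ → ℝ) (hM : Monotone W) (h0 : ∀ x, 0 ≤ W x) (γ : ℝ) (hγ : 0 < γ)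
    (hLI : IntegrableOn (fun w => Real.exp (-γ * w) * W w) (Ioi 0)) :
    ∃ C, 0 ≤ C ∧ ∀ y ≥ 0, W y ≤ C * Real.exp (γ * y) := by
  have hnn : ∀ w, 0 ≤ Real.exp (-γ * w) * W w := fun w => mul_nonneg (Real.exp_pos _).le (h0 w)
  refine ⟨γ * ∫ w in Ioi (0:ℝ), Real.exp (-γ * w) * W w,
    mul_nonneg hγ.le (integral_nonneg hnn), fun y hy => ?_⟩
  have h1 : ∫ w in Ioi y, Real.exp (-γ * w) * W y ≤ ∫ w in Ioi (0:ℝ), Real.exp (-γ * w) * W w := by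
    calc _ ≤ ∫ w in Ioi y, Real.exp (-γ * w) * W w := by
          refine setIntegral_mono_on ?_ (hLI.mono_set (Ioi_subset_Ioi hy)) measurableSet_Ioi ?_
          · exact (integrableOn_exp_mul_Ioi (by linarith) y).mul_const _
          · intro x hx
            exact mul_le_mul_of_nonneg_left (hM (le_of_lt hx)) (Real.exp_pos _).le
      _ ≤ _ := setIntegral_mono_set hLI (Eventually.of_forall hnn)
          (Ioi_subset_Ioi hy).eventuallyLE
  rw [integral_mul_const, integral_exp_mul_Ioi (by linarith)] at h1
  have h2 : -Real.exp (-γ * y) / -γ * W y * (γ * Real.exp (γ * y)) = W y := by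
    have : Real.exp (-γ * y) * Real.exp (γ * y) = 1 := by
      rw [← Real.exp_add]; simp
    rw [neg_mul] at this ⊢
    field_simp
    linear_combination (W y) * this
  calc W y = _ := h2.symm
    _ ≤ _ := mul_le_mul_of_nonneg_right h1 (by positivity)
    _ = _ := by ring

theorem tendsto_yW (Φ : ℝ) (hΦ : 0 < Φ) (W : ℝ → ℝ) (hM : Monotone W) (h0 : ∀ x, 0 ≤ W x)
    (hLI : ∀ β > Φ, IntegrableOn (fun w => Real.exp (-β * w) * W w) (Ioi 0))
    (β : ℝ) (hβ : Φ < β) (n : ℕ) :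
    Tendsto (fun y => Real.exp (-β * y) * (y ^ n * W y)) atTop (nhds 0) := by
  obtain ⟨C, hC0, hC⟩ := exp_bound W hM h0 ((Φ+β)/2) (by linarith) (hLI _ (by linarith))
  have hd : 0 < (β - Φ)/2 := by linarith
  have h1 : Tendsto (fun y : ℝ => C * (y ^ n * Real.exp (-((β-Φ)/2) * y))) atTop (nhds (C * 0)) := by
    refine Tendsto.const_mul _ ?_
    have := tendsto_rpow_mul_exp_neg_mul_atTop_nhds_zero n ((β-Φ)/2) hd
    simpa using this
  rw [mul_zero] at h1
  refine squeeze_zero' ?_ ?_ h1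
  · filter_upwards [eventually_ge_atTop 0] with y hy
    have := h0 y
    positivity
  · filter_upwards [eventually_ge_atTop 0] with y hy
    have h2 : Real.exp (-((β-Φ)/2) * y) = Real.exp (-β * y) * Real.exp ((Φ+β)/2 * y) := by
      rw [← Real.exp_add]; ring_nf
    rw [h2]
    have := mul_le_mul_of_nonneg_left (hC y hy) (show 0 ≤ Real.exp (-β * y) * y ^ n by positivity)
    calc _ = _ := by ring
      _ ≤ _ := this
      _ = _ := by ring

theorem lap_P (Φ : ℝ) (hΦ : 0 < Φ) (W : ℝ → ℝ) (hM : Monotone W) (h0 : ∀ x, 0 ≤ W x)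
    (hWc : ContinuousOn W (Set.Ici 0))
    (hLI : ∀ β > Φ, IntegrableOn (fun w => Real.exp (-β * w) * W w) (Ioi 0))
    (β : ℝ) (hβ : Φ < β) :
    IntegrableOn (fun y => Real.exp (-β * y) * ∫ w in (0:ℝ)..y, W w) (Ioi 0) ∧
    ∫ y in Ioi (0:ℝ), Real.exp (-β * y) * (∫ w in (0:ℝ)..y, W w) =
      (∫ w in Ioi (0:ℝ), Real.exp (-β * w) * W w) / β := by
  have hβ0 : 0 < β := by linarith
  set L := ∫ w in Ioi (0:ℝ), Real.exp (-β * w) * W w with hL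
  set P : ℝ → ℝ := fun y => ∫ w in (0:ℝ)..y, W w with hP
  set A : ℝ → ℝ := fun y => ∫ w in (0:ℝ)..y, Real.exp (-β * w) * W w with hA
  have hWI : ∀ a b, IntervalIntegrable W volume a b := fun a b => hM.intervalIntegrable
  have hEI : ∀ a b, IntervalIntegrable (fun w => Real.exp (-β * w) * W w) volume a b :=
    fun a b => (hWI a b).continuousOn_mul (by fun_prop)
  have hcW : ∀ y > 0, ContinuousAt W y := fun y hy => hWc.continuousAt (Ici_mem_nhds hy)
  have hPd : ∀ y > 0, HasDerivAt P (W y) y := fun y hy =>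
    intervalIntegral.integral_hasDerivAt_right (hWI _ _)
      hM.measurable.stronglyMeasurable.stronglyMeasurableAtFilter (hcW y hy)
  have hAd : ∀ y > 0, HasDerivAt A (Real.exp (-β * y) * W y) y := fun y hy =>
    intervalIntegral.integral_hasDerivAt_right (hEI _ _)
      (Measurable.stronglyMeasurable (by have := hM.measurable; fun_prop)).stronglyMeasurableAtFilter
      (ContinuousAt.mul (by fun_prop) (hcW y hy))
  have hPc : Continuous P := intervalIntegral.continuous_primitive hWI 0
  have hAc : Continuous A := intervalIntegral.continuous_primitive hEI 0
  set h : ℝ → ℝ := fun y => (A y - Real.exp (-β * y) * P y) / β with hh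
  have hhc : ContinuousWithinAt h (Ici 0) 0 := by
    apply Continuous.continuousWithinAt; fun_prop
  have hhd : ∀ y ∈ Ioi (0:ℝ), HasDerivAt h (Real.exp (-β * y) * P y) y := by
    intro y hy
    have e1 : HasDerivAt (fun y => Real.exp (-β * y)) (Real.exp (-β * y) * (-β)) y := by
      simpa using ((hasDerivAt_id y).const_mul (-β)).exp
    have := ((hAd y hy).sub (e1.mul (hPd y hy))).div_const β
    refine this.congr_deriv ?_
    field_simp
    ring
  have hPnn : ∀ y ∈ Ioi (0:ℝ), 0 ≤ Real.exp (-β * y) * P y := by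
    intro y hy
    exact mul_nonneg (Real.exp_pos _).le
      (intervalIntegral.integral_nonneg (le_of_lt hy) fun x _ => h0 x)
  have hAl : Tendsto A atTop (nhds L) :=
    intervalIntegral_tendsto_integral_Ioi 0 (hLI β hβ) tendsto_id
  have hPl : Tendsto (fun y => Real.exp (-β * y) * P y) atTop (nhds 0) := by
    refine squeeze_zero' ?_ ?_ (tendsto_yW Φ hΦ W hM h0 hLI β hβ 1)
    · filter_upwards [eventually_gt_atTop 0] with y hy using hPnn y hy
    · filter_upwards [eventually_gt_atTop 0] with y hy
      refine mul_le_mul_of_nonneg_left ?_ (Real.exp_pos _).le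
      have : P y ≤ ∫ w in (0:ℝ)..y, W y :=
        intervalIntegral.integral_mono_on hy.le (hWI _ _) (by simp) fun x hx => hM hx.2
      simpa using this
  have hl : Tendsto h atTop (nhds (L / β)) := by
    have := (hAl.sub hPl).div_const β
    simpa [hh] using this
  refine ⟨integrableOn_Ioi_deriv_of_nonneg hhc hhd hPnn hl, ?_⟩
  rw [integral_Ioi_of_hasDerivAt_of_nonneg hhc hhd hPnn hl]
  simp [hh, hA, hP]

theorem lap_deriv (Φ : ℝ) (hΦ : 0 < Φ) (W : ℝ → ℝ) (hM : Monotone W) (h0 : ∀ x, 0 ≤ W x)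
    (hWc : ContinuousOn W (Set.Ici 0))
    (hLI : ∀ β > Φ, IntegrableOn (fun w => Real.exp (-β * w) * W w) (Ioi 0))
    (hWd : ∀ w ∈ Set.Ioi (0:ℝ), DifferentiableAt ℝ W w) (β : ℝ) (hβ : Φ < β) :
    IntegrableOn (fun y => Real.exp (-β * y) * deriv W y) (Ioi 0) ∧
    ∫ y in Ioi (0:ℝ), Real.exp (-β * y) * deriv W y =
      β * (∫ w in Ioi (0:ℝ), Real.exp (-β * w) * W w) - W 0 := by
  have hβ0 : 0 < β := by linarith
  set L := ∫ w in Ioi (0:ℝ), Real.exp (-β * w) * W w with hL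
  set A : ℝ → ℝ := fun y => ∫ w in (0:ℝ)..y, Real.exp (-β * w) * W w with hA
  have hWI : ∀ a b, IntervalIntegrable W volume a b := fun a b => hM.intervalIntegrable
  have hEI : ∀ a b, IntervalIntegrable (fun w => Real.exp (-β * w) * W w) volume a b :=
    fun a b => (hWI a b).continuousOn_mul (by fun_prop)
  have hcW : ∀ y > 0, ContinuousAt W y := fun y hy => hWc.continuousAt (Ici_mem_nhds hy)
  have hAd : ∀ y > 0, HasDerivAt A (Real.exp (-β * y) * W y) y := fun y hy =>
    intervalIntegral.integral_hasDerivAt_right (hEI _ _)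
      (Measurable.stronglyMeasurable (by have := hM.measurable; fun_prop)).stronglyMeasurableAtFilter
      (ContinuousAt.mul (by fun_prop) (hcW y hy))
  have hAc : Continuous A := intervalIntegral.continuous_primitive hEI 0
  set h : ℝ → ℝ := fun y => β * A y + Real.exp (-β * y) * W y with hh
  have hhc : ContinuousWithinAt h (Ici 0) 0 := by
    refine ContinuousWithinAt.add ?_ (ContinuousWithinAt.mul ?_ (hWc 0 self_mem_Ici))
    · apply Continuous.continuousWithinAt; fun_prop
    · apply Continuous.continuousWithinAt; fun_prop
  have hhd : ∀ y ∈ Ioi (0:ℝ), HasDerivAt h (Real.exp (-β * y) * deriv W y) y := by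
    intro y hy
    have e1 : HasDerivAt (fun y => Real.exp (-β * y)) (Real.exp (-β * y) * (-β)) y := by
      simpa using ((hasDerivAt_id y).const_mul (-β)).exp
    have := ((hAd y hy).const_mul β).add (e1.mul (hWd y hy).hasDerivAt)
    refine this.congr_deriv ?_
    ring
  have hPnn : ∀ y ∈ Ioi (0:ℝ), 0 ≤ Real.exp (-β * y) * deriv W y := by
    intro y hy
    exact mul_nonneg (Real.exp_pos _).le hM.deriv_nonneg
  have hAl : Tendsto A atTop (nhds L) :=
    intervalIntegral_tendsto_integral_Ioi 0 (hLI β hβ) tendsto_id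
  have hPl := tendsto_yW Φ hΦ W hM h0 hLI β hβ 0
  have hl : Tendsto h atTop (nhds (β * L)) := by
    have := (hAl.const_mul β).add hPl
    simpa [hh] using this
  refine ⟨integrableOn_Ioi_deriv_of_nonneg hhc hhd hPnn hl, ?_⟩
  rw [integral_Ioi_of_hasDerivAt_of_nonneg hhc hhd hPnn hl]
  simp [hh, hA]

noncomputable def gfun (β z : ℝ) : ℝ :=
  Real.exp (-β * z) - 1 + Set.indicator (Set.Ioo (0:ℝ) 1) (fun w => β * w) z

theorem exp_quad (x : ℝ) (hx : 0 ≤ x) :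
    0 ≤ Real.exp (-x) - 1 + x ∧ Real.exp (-x) - 1 + x ≤ x ^ 2 := by
  constructor
  · have := Real.add_one_le_exp (-x); linarith
  · rcases le_total x 1 with h | h
    · have := Real.abs_exp_sub_one_sub_id_le (x := -x) (by rw [abs_neg, abs_of_nonneg hx]; exact h)
      have := (abs_le.1 this).2
      nlinarith
    · have : Real.exp (-x) ≤ 1 := Real.exp_le_one_iff.2 (by linarith)
      nlinarith

theorem gfun_lt (β z : ℝ) (hz : 0 < z) (h : z < 1) :
    gfun β z = Real.exp (-(β * z)) - 1 + β * z := by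
  have : z ∈ Ioo (0:ℝ) 1 := ⟨hz, h⟩
  simp [gfun, indicator_of_mem this]

theorem gfun_ge (β z : ℝ) (h : 1 ≤ z) : gfun β z = Real.exp (-(β * z)) - 1 := by
  have : z ∉ Ioo (0:ℝ) 1 := fun h' => not_lt.2 h h'.2
  simp [gfun, indicator_of_notMem this]

theorem gfun_lower (β z : ℝ) (hβ : 0 < β) (hz : 0 < z) : -min 1 (z ^ 2) ≤ gfun β z := by
  rcases lt_or_ge z 1 with h | h
  · rw [gfun_lt β z hz h]
    have := (exp_quad (β * z) (by positivity)).1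
    have : 0 ≤ min 1 (z ^ 2) := by positivity
    linarith
  · rw [gfun_ge β z h, min_eq_left (by nlinarith)]
    have := Real.exp_pos (-(β * z))
    linarith

theorem gfun_abs (β z : ℝ) (hβ : 0 < β) (hz : 0 < z) :
    |gfun β z| ≤ (1 + β ^ 2) * min 1 (z ^ 2) := by
  rw [abs_le]
  have h0 : 0 ≤ min 1 (z ^ 2) := by positivity
  constructor
  · have := gfun_lower β z hβ hz
    nlinarith [sq_nonneg β]
  · rcases lt_or_ge z 1 with h | h
    · rw [gfun_lt β z hz h, min_eq_right (by nlinarith)]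
      have := (exp_quad (β * z) (by positivity)).2
      nlinarith
    · rw [gfun_ge β z h]
      have : Real.exp (-(β * z)) ≤ 1 := Real.exp_le_one_iff.2 (by
        have : 0 < β * z := by positivity
        linarith)
      have : 0 ≤ (1 + β ^ 2) * min 1 (z ^ 2) := by positivity
      linarith

theorem gfun_meas (β : ℝ) : Measurable (gfun β) := by
  unfold gfun
  refine Measurable.add (by fun_prop) ?_
  exact Measurable.indicator (by fun_prop) measurableSet_Ioo

theorem nu_sf (ν : Measure ℝ)
    (hν : ∫⁻ z in Set.Ioi (0:ℝ), ENNReal.ofReal (min 1 (z ^ 2)) ∂ν < ⊤) : SFinite (ν.restrict (Ioi 0)) := by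
  set n := ν.restrict (Ioi (0:ℝ))
  set f : ℝ → ENNReal := fun z => ENNReal.ofReal (min 1 (z ^ 2)) with hf
  have hfm : Measurable f := by fun_prop
  have : IsFiniteMeasure (n.withDensity f) := isFiniteMeasure_withDensity hν.ne
  have h := withDensity_inv_same (μ := n) hfm (by
    filter_upwards [ae_restrict_mem measurableSet_Ioi] with z hz
    have hz' : (0:ℝ) < z := hz
    have : 0 < min 1 (z ^ 2) := by positivity
    simp only [hf, ne_eq, ENNReal.ofReal_eq_zero, not_le]
    exact this) (by
    filter_upwards with z
    simp [hf])
  rw [← h]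
  infer_instance

theorem min_int (ν : Measure ℝ)
    (hν : ∫⁻ z in Set.Ioi (0:ℝ), ENNReal.ofReal (min 1 (z ^ 2)) ∂ν < ⊤) : IntegrableOn (fun z : ℝ => min 1 (z ^ 2)) (Ioi 0) ν := by
  refine ⟨(by fun_prop), ?_⟩
  rw [hasFiniteIntegral_iff_ofReal]
  · exact hν
  · exact Eventually.of_forall fun z => by simp only [Pi.zero_apply]; positivity

theorem gfun_int (ν : Measure ℝ)
    (hν : ∫⁻ z in Set.Ioi (0:ℝ), ENNReal.ofReal (min 1 (z ^ 2)) ∂ν < ⊤)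
    (β : ℝ) (hβ : 0 < β) : IntegrableOn (gfun β) (Ioi 0) ν := by
  refine Integrable.mono' ((min_int ν hν).const_mul (1 + β ^ 2))
    (gfun_meas β).aestronglyMeasurable ?_
  filter_upwards [ae_restrict_mem measurableSet_Ioi] with z hz
  exact gfun_abs β z hβ hz

theorem gfun_int_lower (ν : Measure ℝ)
    (hν : ∫⁻ z in Set.Ioi (0:ℝ), ENNReal.ofReal (min 1 (z ^ 2)) ∂ν < ⊤)
    (β : ℝ) (hβ : 0 < β) :
    -(∫ z in Ioi (0:ℝ), min 1 (z ^ 2) ∂ν) ≤ ∫ z in Ioi (0:ℝ), gfun β z ∂ν := by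
  rw [← integral_neg]
  refine setIntegral_mono_on (min_int ν hν).neg (gfun_int ν hν β hβ) measurableSet_Ioi ?_
  intro z hz
  exact gfun_lower β z hβ hz

theorem cont_K (ν : Measure ℝ)
    (hν : ∫⁻ z in Set.Ioi (0:ℝ), ENNReal.ofReal (min 1 (z ^ 2)) ∂ν < ⊤)
    (Φ : ℝ) (hΦ : 0 < Φ) (W : ℝ → ℝ) (hM : Monotone W) (h0 : ∀ x, 0 ≤ W x)
    (hWc : ContinuousOn W (Set.Ici 0))
    (P : ℝ → ℝ) (hP : P = fun x => ∫ w in (0:ℝ)..x, W w)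
    (hP0 : ∀ x ≤ 0, P x = 0)
    (hWd : ∀ w ∈ Set.Ioi (0:ℝ), DifferentiableAt ℝ W w)
    (hWd' : ContinuousOn (deriv W) (Set.Ioi 0)) (y₀ : ℝ) (hy₀ : 0 < y₀) :
    ContinuousAt (fun y => ∫ u in Ioi (0:ℝ),
      (W y * ((1 - Real.exp (-Φ * u)) / Φ) - (P y - P (y - u))) ∂ν) y₀ := by
  have hPc : Continuous P := by
    rw [hP]; exact intervalIntegral.continuous_primitive (fun a b => hM.intervalIntegrable) 0
  have hPadd : ∀ y u, P y - P (y - u) = ∫ w in (y-u)..y, W w := by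
    intro y u
    simp only [hP]
    rw [intervalIntegral.integral_interval_sub_left] <;> exact hM.intervalIntegrable
  have hPnn : ∀ x, 0 ≤ P x := by
    intro x
    rcases le_total x 0 with h | h
    · rw [hP0 x h]
    · rw [hP]; exact intervalIntegral.integral_nonneg h fun t _ => h0 t
  have hPm : Monotone P := by
    intro x z hxz
    have : 0 ≤ P z - P (z - (z - x)) := by
      rw [hPadd]
      exact intervalIntegral.integral_nonneg (by linarith) fun t _ => h0 t
    rw [sub_sub_cancel] at this
    linarith
  set a := y₀ / 2 with ha
  set b := 2 * y₀ with hb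
  have ha0 : 0 < a := by positivity
  obtain ⟨M, hMb⟩ : ∃ M, ∀ x ∈ Icc (a/2) b, ‖deriv W x‖ ≤ M :=
    isCompact_Icc.exists_bound_of_continuousOn
      (hWd'.mono fun x hx => lt_of_lt_of_le (by positivity) hx.1)
  set δ := min (a/2) 1 with hδ
  have hδ0 : 0 < δ := by positivity
  have hδ1 : δ ≤ 1 := min_le_right _ _
  have hδa : δ ≤ a / 2 := min_le_left _ _
  set C1 := W b * Φ + |M| with hC1
  set C2 := W b / Φ + P b with hC2
  have hWb := h0 b
  have hPb := hPnn b
  have hC10 : 0 ≤ C1 := by positivity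
  have hC20 : 0 ≤ C2 := by positivity
  have hbound : ∀ y ∈ Icc a b, ∀ u > 0,
      |W y * ((1 - Real.exp (-Φ * u)) / Φ) - (P y - P (y - u))| ≤
        (C1 + C2 / δ ^ 2) * min 1 (u ^ 2) := by
    intro y hy u hu
    have hWy : W y ≤ W b := hM hy.2
    have hWy0 := h0 y
    have hm0 : 0 ≤ min 1 (u ^ 2) := by positivity
    rcases le_or_gt u δ with h | h
    · have hmin : min 1 (u ^ 2) = u ^ 2 := min_eq_right (by nlinarith)
      have hq := exp_quad (Φ * u) (by positivity)
      have e1 : W y * ((1 - Real.exp (-Φ * u)) / Φ) - (P y - P (y - u)) =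
          (W y * u - (P y - P (y - u))) - W y * ((Real.exp (-(Φ * u)) - 1 + Φ * u) / Φ) := by
        rw [neg_mul]
        field_simp
        ring
      have hA : 0 ≤ W y * u - (P y - P (y - u)) ∧ W y * u - (P y - P (y - u)) ≤ |M| * u ^ 2 := by
        have e2 : W y * u - (P y - P (y - u)) = ∫ w in (y-u)..y, (W y - W w) := by
          rw [hPadd, intervalIntegral.integral_sub (by simp) hM.intervalIntegrable]
          simp [mul_comm]
        rw [e2]
        constructor
        · exact intervalIntegral.integral_nonneg (by linarith) fun t ht => by
            have := hM ht.2
            linarith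
        · have : ∫ w in (y-u)..y, (W y - W w) ≤ ∫ w in (y-u)..y, |M| * u := by
            refine intervalIntegral.integral_mono_on (by linarith)
              (IntervalIntegrable.sub (by simp) hM.intervalIntegrable) (by simp) ?_
            intro x hx
            have hxI : x ∈ Icc (a/2) b := ⟨by linarith [hx.1, hy.1], by linarith [hx.2, hy.2]⟩
            have hyI : y ∈ Icc (a/2) b := ⟨by linarith [hy.1], hy.2⟩
            have := (convex_Icc (a/2) b).norm_image_sub_le_of_norm_deriv_le (f := W) (C := M)
              (fun t ht => hWd t (lt_of_lt_of_le (by positivity) ht.1)) hMb hxI hyI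
            rw [Real.norm_eq_abs, Real.norm_eq_abs, abs_of_nonneg (a := y - x) (by linarith [hx.2])] at this
            calc W y - W x ≤ |W y - W x| := le_abs_self _
              _ ≤ M * (y - x) := this
              _ ≤ |M| * (y - x) := mul_le_mul_of_nonneg_right (le_abs_self _) (by linarith [hx.2])
              _ ≤ |M| * u := mul_le_mul_of_nonneg_left (by linarith [hx.1]) (abs_nonneg _)
          refine this.trans (le_of_eq ?_)
          rw [intervalIntegral.integral_const, smul_eq_mul]
          ring
      have hB : 0 ≤ W y * ((Real.exp (-(Φ * u)) - 1 + Φ * u) / Φ) ∧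
          W y * ((Real.exp (-(Φ * u)) - 1 + Φ * u) / Φ) ≤ W b * Φ * u ^ 2 := by
        constructor
        · exact mul_nonneg hWy0 (div_nonneg hq.1 hΦ.le)
        · have : (Real.exp (-(Φ * u)) - 1 + Φ * u) / Φ ≤ Φ * u ^ 2 := by
            rw [div_le_iff₀ hΦ]; nlinarith [hq.2]
          calc _ ≤ W b * (Φ * u ^ 2) := mul_le_mul hWy this (div_nonneg hq.1 hΦ.le) hWb
            _ = _ := by ring
      rw [e1, hmin]
      have hx : 0 ≤ C2 / δ ^ 2 * u ^ 2 := by positivity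
      have hx1 : 0 ≤ W b * Φ * u ^ 2 := by positivity
      have hx2 : 0 ≤ |M| * u ^ 2 := by positivity
      have hx3 : (C1 + C2 / δ ^ 2) * u ^ 2 = W b * Φ * u ^ 2 + |M| * u ^ 2 + C2 / δ ^ 2 * u ^ 2 := by
        rw [hC1]; ring
      rw [hx3, abs_le]
      constructor <;> linarith [hA.1, hA.2, hB.1, hB.2]
    · have hmin : δ ^ 2 ≤ min 1 (u ^ 2) := le_min (by nlinarith) (by nlinarith)
      have h2 : C2 ≤ C2 / δ ^ 2 * min 1 (u ^ 2) := by
        calc C2 = C2 / δ ^ 2 * δ ^ 2 := by field_simp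
          _ ≤ _ := mul_le_mul_of_nonneg_left hmin (by positivity)
      have h3 : 0 ≤ C1 * min 1 (u ^ 2) := by positivity
      have h4 : 0 ≤ (1 - Real.exp (-Φ * u)) / Φ ∧ (1 - Real.exp (-Φ * u)) / Φ ≤ 1 / Φ := by
        have : Real.exp (-Φ * u) ≤ 1 := Real.exp_le_one_iff.2 (by nlinarith)
        have := Real.exp_pos (-Φ * u)
        constructor
        · exact div_nonneg (by linarith) hΦ.le
        · gcongr; linarith
      have h5 : 0 ≤ W y * ((1 - Real.exp (-Φ * u)) / Φ) := mul_nonneg hWy0 h4.1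
      have h6 : W y * ((1 - Real.exp (-Φ * u)) / Φ) ≤ W b / Φ := by
        calc _ ≤ W b * (1 / Φ) := mul_le_mul hWy h4.2 h4.1 hWb
          _ = _ := by ring
      have h7 : 0 ≤ P y - P (y - u) := sub_nonneg.2 (hPm (by linarith))
      have h8 : P y - P (y - u) ≤ P b := by
        have := hPnn (y - u)
        have := hPm hy.2
        linarith
      have h9 : 0 ≤ W b / Φ := by positivity
      rw [abs_le, add_mul]
      constructor <;> linarith
  refine continuousAt_of_dominated (bound := fun u => (C1 + C2 / δ ^ 2) * min 1 (u ^ 2)) ?_ ?_ ?_ ?_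
  · refine Eventually.of_forall fun y => ?_
    have := hPc.measurable
    exact Measurable.aestronglyMeasurable (by fun_prop)
  · filter_upwards [Icc_mem_nhds (show a < y₀ by linarith) (show y₀ < b by linarith)] with y hy
    filter_upwards [ae_restrict_mem measurableSet_Ioi] with u hu
    exact hbound y hy u hu
  · exact (min_int ν hν).const_mul _
  · refine Eventually.of_forall fun u => ?_
    have hcW : ContinuousAt W y₀ := hWc.continuousAt (Ici_mem_nhds hy₀)
    have h1 : ContinuousAt P y₀ := hPc.continuousAt
    have h2 : ContinuousAt (fun y => P (y - u)) y₀ := by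
      apply Continuous.continuousAt; fun_prop
    exact (hcW.mul continuousAt_const).sub (h1.sub h2)

theorem lap_K (ν : Measure ℝ)
    (hν : ∫⁻ z in Set.Ioi (0:ℝ), ENNReal.ofReal (min 1 (z ^ 2)) ∂ν < ⊤)
    (Φ : ℝ) (hΦ : 0 < Φ) (W : ℝ → ℝ) (hM : Monotone W) (h0 : ∀ x, 0 ≤ W x)
    (hWc : ContinuousOn W (Set.Ici 0))
    (hLI : ∀ β > Φ, IntegrableOn (fun w => Real.exp (-β * w) * W w) (Ioi 0))
    (P : ℝ → ℝ) (hP : P = fun x => ∫ w in (0:ℝ)..x, W w)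
    (hP0 : ∀ x ≤ 0, P x = 0) (β : ℝ) (hβ : Φ < β) :
    IntegrableOn (fun y => Real.exp (-β * y) * ∫ u in Ioi (0:ℝ),
      (W y * ((1 - Real.exp (-Φ * u)) / Φ) - (P y - P (y - u))) ∂ν) (Ioi 0) ∧
    ∫ y in Ioi (0:ℝ), (Real.exp (-β * y) * ∫ u in Ioi (0:ℝ),
      (W y * ((1 - Real.exp (-Φ * u)) / Φ) - (P y - P (y - u))) ∂ν) =
    (∫ w in Ioi (0:ℝ), Real.exp (-β * w) * W w) *
      ((∫ z in Ioi (0:ℝ), gfun β z ∂ν) / β - (∫ z in Ioi (0:ℝ), gfun Φ z ∂ν) / Φ) := by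
  have hβ0 : 0 < β := by linarith
  have := nu_sf ν hν
  set n := ν.restrict (Ioi (0:ℝ)) with hn
  set lam := (volume : Measure ℝ).restrict (Ioi (0:ℝ)) with hlam
  set L := ∫ w, Real.exp (-β * w) * W w ∂lam with hL
  have hPc : Continuous P := by
    rw [hP]; exact intervalIntegral.continuous_primitive (fun a b => hM.intervalIntegrable) 0
  have hPadd : ∀ y u, P y - P (y - u) = ∫ w in (y-u)..y, W w := by
    intro y u
    simp only [hP]
    rw [intervalIntegral.integral_interval_sub_left] <;> exact hM.intervalIntegrable
  obtain ⟨hPi, hPe⟩ := lap_P Φ hΦ W hM h0 hWc hLI β hβ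
  have hPi' : Integrable (fun y => Real.exp (-β * y) * P y) lam := by rw [hP]; exact hPi
  have hPe' : ∫ y, Real.exp (-β * y) * P y ∂lam = L / β := by rw [hP]; exact hPe
  set G : ℝ → ℝ := fun x => Real.exp (-β * x) * P x with hG
  have hG0 : ∀ x ≤ 0, G x = 0 := fun x hx => by simp [hG, hP0 x hx]
  have hGi : Integrable G := by
    rw [← integrableOn_iff_integrable_of_support_subset (s := Ioi (0:ℝ))]
    · exact hPi'
    · intro x hx
      by_contra h
      exact hx (hG0 x (not_lt.1 h))
  have hGe : ∫ x, G x = L / β := by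
    rw [← hPe', hlam, setIntegral_eq_integral_of_forall_compl_eq_zero]
    intro x hx
    exact hG0 x (not_lt.1 hx)
  have hshift : ∀ u > 0, Integrable (fun y => Real.exp (-β * y) * P (y - u)) lam ∧
      ∫ y, Real.exp (-β * y) * P (y - u) ∂lam = Real.exp (-β * u) * (L / β) := by
    intro u hu
    have e : (fun y => Real.exp (-β * y) * P (y - u)) = fun y => Real.exp (-β * u) * G (y - u) := by
      funext y
      simp only [hG, ← mul_assoc, ← Real.exp_add]
      ring_nf
    rw [e]
    refine ⟨((hGi.comp_sub_right u).const_mul _).integrableOn, ?_⟩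
    rw [integral_const_mul, hlam, setIntegral_eq_integral_of_forall_compl_eq_zero,
      integral_sub_right_eq_self (f := G), hGe]
    intro x hx
    have hx' : x ≤ 0 := not_lt.1 hx
    exact hG0 _ (by linarith)
  set τ : ℝ → ℝ := fun u => Set.indicator (Set.Ioo (0:ℝ) 1) (fun w => w) u with hτ
  have hgτ : ∀ b u, gfun b u = Real.exp (-b * u) - 1 + b * τ u := by
    intro b u
    by_cases h : u ∈ Ioo (0:ℝ) 1
    · simp [gfun, hτ, indicator_of_mem h]
    · simp [gfun, hτ, indicator_of_notMem h]
  have hτm : Measurable τ := Measurable.indicator measurable_id measurableSet_Ioo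
  have hWL : Integrable (fun w => Real.exp (-β * w) * W w) lam := hLI β hβ
  have hWm : Measurable W := hM.measurable
  -- first piece
  have hF1 : Integrable (fun z : ℝ × ℝ => (Real.exp (-β * z.1) * W z.1) * (-(gfun Φ z.2) / Φ))
      (lam.prod n) :=
    hWL.mul_prod ((gfun_int ν hν Φ hΦ).neg.div_const Φ)
  set F2 : ℝ × ℝ → ℝ := fun z =>
    Real.exp (-β * z.1) * (W z.1 * τ z.2 - (P z.1 - P (z.1 - z.2))) with hF2d
  have hF2m : Measurable F2 := by
    have := hPc.measurable
    fun_prop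
  have hF2u : ∀ u > 0, Integrable (fun y => F2 (y, u)) lam ∧
      ∫ y, F2 (y, u) ∂lam = L * (gfun β u / β) := by
    intro u hu
    obtain ⟨hs1, hs2⟩ := hshift u hu
    have e : (fun y => F2 (y, u)) = fun y => (Real.exp (-β * y) * W y) * τ u -
        (Real.exp (-β * y) * P y - Real.exp (-β * y) * P (y - u)) := by
      funext y
      simp only [hF2d]
      ring
    rw [e]
    have i1 : Integrable (fun y => (Real.exp (-β * y) * W y) * τ u) lam := hWL.mul_const _
    have i2 : Integrable (fun y => Real.exp (-β * y) * P y) lam := hPi'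
    have i3 : Integrable (fun y => Real.exp (-β * y) * P y - Real.exp (-β * y) * P (y - u)) lam :=
      i2.sub hs1
    have v2 : ∫ y, Real.exp (-β * y) * P y ∂lam = L / β := hPe'
    refine ⟨i1.sub i3, ?_⟩
    rw [integral_sub i1 i3, integral_sub i2 hs1, integral_mul_const, hs2, v2, hgτ, ← hL]
    field_simp
    ring
  have hF2n : ∀ u > 0, ∫ y, ‖F2 (y, u)‖ ∂lam = L * (|gfun β u| / β) := by
    intro u hu
    obtain ⟨hi, he⟩ := hF2u u hu
    have hL0 : 0 ≤ L := integral_nonneg fun w => mul_nonneg (Real.exp_pos _).le (h0 w)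
    have conv : L * (|gfun β u| / β) = |∫ y, F2 (y, u) ∂lam| := by
      rw [he, abs_mul, abs_div, abs_of_nonneg hL0, abs_of_pos hβ0]
    rw [conv]
    rcases lt_or_ge u 1 with h | h
    · have hτu : τ u = u := indicator_of_mem (show u ∈ Ioo (0:ℝ) 1 from ⟨hu, h⟩) _
      have hnn : ∀ y, 0 ≤ F2 (y, u) := by
        intro y
        simp only [hF2d]
        refine mul_nonneg (Real.exp_pos _).le ?_
        rw [hPadd, hτu]
        have : ∫ w in (y-u)..y, W w ≤ ∫ w in (y-u)..y, W y :=
          intervalIntegral.integral_mono_on (by linarith) hM.intervalIntegrable (by simp)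
            fun x hx => hM hx.2
        simp at this
        linarith
      rw [abs_of_nonneg (integral_nonneg hnn)]
      exact integral_congr_ae (Eventually.of_forall fun y => Real.norm_of_nonneg (hnn y))
    · have hτu : τ u = 0 := indicator_of_notMem (fun h' => not_lt.2 h h'.2) _
      have hnn : ∀ y, F2 (y, u) ≤ 0 := by
        intro y
        simp only [hF2d]
        refine mul_nonpos_of_nonneg_of_nonpos (Real.exp_pos _).le ?_
        rw [hPadd, hτu]
        have : 0 ≤ ∫ w in (y-u)..y, W w :=
          intervalIntegral.integral_nonneg (by linarith) fun x _ => h0 x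
        linarith
      rw [abs_of_nonpos (integral_nonpos hnn), ← integral_neg]
      exact integral_congr_ae (Eventually.of_forall fun y => Real.norm_of_nonpos (hnn y))
  have hF2 : Integrable F2 (lam.prod n) := by
    rw [integrable_prod_iff' hF2m.aestronglyMeasurable]
    constructor
    · filter_upwards [ae_restrict_mem measurableSet_Ioi] with u hu using (hF2u u hu).1
    · have : Integrable (fun u => L * (|gfun β u| / β)) n :=
        ((gfun_int ν hν β hβ0).abs.div_const β).const_mul L
      refine this.congr ?_
      filter_upwards [ae_restrict_mem measurableSet_Ioi] with u hu using (hF2n u hu).symm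
  have hF := hF1.add hF2
  have hsum : ∀ y u, ((fun z : ℝ × ℝ => (Real.exp (-β * z.1) * W z.1) * (-(gfun Φ z.2) / Φ)) + F2)
      (y, u) = Real.exp (-β * y) *
        (W y * ((1 - Real.exp (-Φ * u)) / Φ) - (P y - P (y - u))) := by
    intro y u
    simp only [Pi.add_apply, hF2d, hgτ]
    field_simp
    ring
  have hI := hF.integral_prod_left
  simp only [hsum, integral_const_mul] at hI
  refine ⟨hI, ?_⟩
  have hR : (∫ y, (Real.exp (-β * y) * ∫ u,
      (W y * ((1 - Real.exp (-Φ * u)) / Φ) - (P y - P (y - u))) ∂n) ∂lam) = ∫ y, ∫ u,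
      ((fun z : ℝ × ℝ => (Real.exp (-β * z.1) * W z.1) * (-(gfun Φ z.2) / Φ)) + F2) (y, u)
        ∂n ∂lam := by
    simp only [hsum, integral_const_mul]
  rw [hR, ← integral_prod _ hF, integral_add' hF1 hF2, integral_prod_mul (fun w => Real.exp (-β * w) * W w)
    (fun u => -(gfun Φ u) / Φ), integral_prod_symm _ hF2]
  have e2 : ∫ u, ∫ y, F2 (y, u) ∂lam ∂n = ∫ u, L * (gfun β u / β) ∂n := by
    refine integral_congr_ae ?_
    filter_upwards [ae_restrict_mem measurableSet_Ioi] with u hu using (hF2u u hu).2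
  rw [e2, integral_const_mul, integral_div, integral_div, integral_neg]
  ring

/-- for every `y > 0`,
`Z(y) − (q/Φ)W(y) − ∫_{(0,∞)} [W(y)(1 − e^{−Φu})/Φ − ∫_0^{min(u,y)} W(y−w) dw] ν(du)
  = (σ²/2)(W'(y) − ΦW(y))`. -/
theorem creeping_identity
    (c σ q Φ y : ℝ) (ν : Measure ℝ) (W : ℝ → ℝ)
    (hσ : 0 ≤ σ) (hq : 0 < q) (hΦ : 0 < Φ)
    (hν : ∫⁻ z in Set.Ioi (0:ℝ), ENNReal.ofReal (min 1 (z ^ 2)) ∂ν < ⊤)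
    (hψΦ : laplaceExponent c σ ν Φ = q)
    (hψ : ∀ β > Φ, laplaceExponent c σ ν β > q)
    (hW0 : ∀ w < (0:ℝ), W w = 0)
    (hWc : ContinuousOn W (Set.Ici 0))
    (hWm : MonotoneOn W (Set.Ici 0))
    (hWd : ∀ w ∈ Set.Ioi (0:ℝ), DifferentiableAt ℝ W w)
    (hWd' : ContinuousOn (deriv W) (Set.Ioi 0))
    (hWLap : ∀ β > Φ,
      (∫ w in Set.Ioi (0:ℝ), Real.exp (-β * w) * W w) = 1 / (laplaceExponent c σ ν β - q))
    (hy : 0 < y) :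
    Zfun q W y - q / Φ * W y -
      (∫ u in Set.Ioi (0:ℝ),
        (W y * ((1 - Real.exp (-Φ * u)) / Φ) - ∫ w in (0:ℝ)..(min u y), W (y - w)) ∂ν)
    = σ ^ 2 / 2 * (deriv W y - Φ * W y) := by
  have hlap : ∀ β, laplaceExponent c σ ν β =
      c * β + σ ^ 2 / 2 * β ^ 2 + ∫ z in Ioi (0:ℝ), gfun β z ∂ν := fun β => rfl
  have hLpos : ∀ β > Φ, 0 < ∫ w in Set.Ioi (0:ℝ), Real.exp (-β * w) * W w := by
    intro β hβ
    rw [hWLap β hβ]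
    exact one_div_pos.2 (sub_pos.2 (hψ β hβ))
  have hLI : ∀ β > Φ, IntegrableOn (fun w => Real.exp (-β * w) * W w) (Ioi 0) := by
    intro β hβ
    by_contra h
    exact (hLpos β hβ).ne' (integral_undef h)
  have hinit := init_value Φ hΦ W hWc hWm hLI
  have hW00 : 0 ≤ W 0 := by
    refine ge_of_tendsto hinit ?_
    filter_upwards [eventually_gt_atTop Φ] with β hβ
    exact mul_nonneg (by linarith) (hLpos β hβ).le
  have h0 : ∀ x, 0 ≤ W x := by
    intro x
    rcases lt_or_ge x 0 with h | h
    · rw [hW0 x h]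
    · exact hW00.trans (hWm self_mem_Ici h h)
  have hM : Monotone W := by
    intro x z hxz
    rcases lt_or_ge x 0 with h | h
    · rw [hW0 x h]; exact h0 z
    · exact hWm h (h.trans hxz) hxz
  have hσW : σ ^ 2 * W 0 = 0 := by
    rcases eq_or_ne σ 0 with h | h
    · simp [h]
    · have hs : 0 < σ ^ 2 / 2 := by positivity
      set D := ∫ z in Ioi (0:ℝ), min 1 (z ^ 2) ∂ν with hD
      have hD0 : 0 ≤ D := integral_nonneg fun z => by positivity
      have h1 : Tendsto (fun β : ℝ => σ ^ 2 / 2 * β + (c - D - q)) atTop atTop :=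
        tendsto_atTop_add_const_right _ _ (tendsto_id.const_mul_atTop hs)
      have h2 : Tendsto (fun β => (laplaceExponent c σ ν β - q) / β) atTop atTop := by
        refine tendsto_atTop_mono' _ ?_ h1
        filter_upwards [eventually_ge_atTop 1] with β hβ
        have hl := gfun_int_lower ν hν β (by linarith)
        rw [hlap, le_div_iff₀ (by linarith)]
        nlinarith
      have h3 := h2.inv_tendsto_atTop
      have h4 : Tendsto (fun β => β * ∫ w in Ioi (0:ℝ), Real.exp (-β * w) * W w) atTop
          (nhds 0) := by
        refine h3.congr' ?_
        filter_upwards [eventually_gt_atTop Φ] with β hβ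
        rw [hWLap β hβ, Pi.inv_apply, inv_div]
        ring
      rw [tendsto_nhds_unique hinit h4, mul_zero]
  set P : ℝ → ℝ := fun x => ∫ w in (0:ℝ)..x, W w with hP
  have hP0 : ∀ x ≤ 0, P x = 0 := by
    intro x hx
    simp only [hP]
    rw [intervalIntegral.integral_symm, intervalIntegral.integral_of_le hx,
      integral_Ioc_eq_integral_Ioo, setIntegral_congr_fun (g := fun _ => (0:ℝ)) measurableSet_Ioo]
    · simp
    · intro t ht
      exact hW0 t ht.2
  have hPc : Continuous P := by
    rw [hP]; exact intervalIntegral.continuous_primitive (fun a b => hM.intervalIntegrable) 0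
  set K : ℝ → ℝ := fun y => ∫ u in Ioi (0:ℝ),
      (W y * ((1 - Real.exp (-Φ * u)) / Φ) - (P y - P (y - u))) ∂ν with hK
  set f : ℝ → ℝ := fun y => 1 + q * P y - q / Φ * W y - K y -
    σ ^ 2 / 2 * (deriv W y - Φ * W y) with hf
  have hlapf : ∀ β > Φ, IntegrableOn (fun y => Real.exp (-β * y) * f y) (Ioi 0) ∧
      ∫ y in Ioi (0:ℝ), Real.exp (-β * y) * f y = 0 := by
    intro β hβ
    have hβ0 : 0 < β := by linarith
    obtain ⟨iP, vP⟩ := lap_P Φ hΦ W hM h0 hWc hLI β hβ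
    obtain ⟨iD, vD⟩ := lap_deriv Φ hΦ W hM h0 hWc hLI hWd β hβ
    obtain ⟨iK, vK⟩ := lap_K ν hν Φ hΦ W hM h0 hWc hLI P hP hP0 β hβ
    have iW := hLI β hβ
    have i1 : IntegrableOn (fun y => Real.exp (-β * y)) (Ioi 0) :=
      integrableOn_exp_mul_Ioi (by linarith) 0
    have v1 : ∫ y in Ioi (0:ℝ), Real.exp (-β * y) = 1 / β := by
      rw [integral_exp_mul_Ioi (by linarith)]; simp
    change IntegrableOn (fun y => Real.exp (-β * y) * P y) (Ioi 0) at iP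
    change ∫ y in Ioi (0:ℝ), Real.exp (-β * y) * P y = _ at vP
    change IntegrableOn (fun y => Real.exp (-β * y) * K y) (Ioi 0) at iK
    change ∫ y in Ioi (0:ℝ), Real.exp (-β * y) * K y = _ at vK
    have e : (fun y => Real.exp (-β * y) * f y) = fun y =>
        (((Real.exp (-β * y) + q * (Real.exp (-β * y) * P y)) -
          (q / Φ - σ ^ 2 / 2 * Φ) * (Real.exp (-β * y) * W y)) - Real.exp (-β * y) * K y) -
          σ ^ 2 / 2 * (Real.exp (-β * y) * deriv W y) := by
      funext y
      simp only [hf]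
      ring
    rw [e]
    have j2 : IntegrableOn (fun y => q * (Real.exp (-β * y) * P y)) (Ioi 0) := iP.const_mul _
    have j3 : IntegrableOn (fun y => (q / Φ - σ ^ 2 / 2 * Φ) * (Real.exp (-β * y) * W y)) (Ioi 0) :=
      iW.const_mul _
    have j5 : IntegrableOn (fun y => σ ^ 2 / 2 * (Real.exp (-β * y) * deriv W y)) (Ioi 0) :=
      iD.const_mul _
    have k2 : IntegrableOn (fun y => Real.exp (-β * y) + q * (Real.exp (-β * y) * P y)) (Ioi 0) :=
      i1.add j2
    have k3 : IntegrableOn (fun y => (Real.exp (-β * y) + q * (Real.exp (-β * y) * P y)) -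
          (q / Φ - σ ^ 2 / 2 * Φ) * (Real.exp (-β * y) * W y)) (Ioi 0) := k2.sub j3
    have k4 : IntegrableOn (fun y => ((Real.exp (-β * y) + q * (Real.exp (-β * y) * P y)) -
          (q / Φ - σ ^ 2 / 2 * Φ) * (Real.exp (-β * y) * W y)) - Real.exp (-β * y) * K y)
          (Ioi 0) := k3.sub iK
    refine ⟨k4.sub j5, ?_⟩
    rw [integral_sub k4 j5, integral_sub k3 iK, integral_sub k2 j3, integral_add i1 j2,
      integral_const_mul, integral_const_mul, integral_const_mul, v1, vP, vK, vD]
    have hL := hWLap β hβ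
    have hpos := sub_pos.2 (hψ β hβ)
    rw [hlap] at hL hpos hψΦ
    set L := ∫ w in Ioi (0:ℝ), Real.exp (-β * w) * W w
    set I1 := ∫ z in Ioi (0:ℝ), gfun β z ∂ν
    set I2 := ∫ z in Ioi (0:ℝ), gfun Φ z ∂ν
    have hL' : L * (c * β + σ ^ 2 / 2 * β ^ 2 + I1 - q) = 1 := by
      rw [hL]; exact one_div_mul_cancel hpos.ne'
    have hI2 : I2 / Φ = q / Φ - c - σ ^ 2 / 2 * Φ := by
      rw [← hψΦ]; field_simp; ring
    have hI1 : L * (I1 / β) = (1 - L * (c * β + σ ^ 2 / 2 * β ^ 2 - q)) / β := by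
      rw [← hL']; field_simp; ring
    rw [mul_sub, hI2, hI1]
    field_simp
    linear_combination Φ * β * hσW
  have hae := laplace_unique Φ f (fun β hβ => (hlapf β hβ).1) (fun β hβ => (hlapf β hβ).2)
  have hfc : ContinuousOn f (Ioi 0) := by
    have hKc : ContinuousOn K (Ioi 0) := fun x hx =>
      (cont_K ν hν Φ hΦ W hM h0 hWc P hP hP0 hWd hWd' x hx).continuousWithinAt
    have hWc' : ContinuousOn W (Ioi 0) := hWc.mono Ioi_subset_Ici_self
    have hPc' : ContinuousOn P (Ioi 0) := hPc.continuousOn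
    fun_prop
  have hf0 : f y = 0 :=
    Measure.eqOn_open_of_ae_eq (g := fun _ => (0:ℝ)) hae isOpen_Ioi hfc continuousOn_const hy
  have hZ : Zfun q W y = 1 + q * P y := by
    simp only [Zfun, max_eq_left hy.le, hP]
  have hKy : (∫ u in Set.Ioi (0:ℝ),
      (W y * ((1 - Real.exp (-Φ * u)) / Φ) - ∫ w in (0:ℝ)..(min u y), W (y - w)) ∂ν) = K y := by
    refine setIntegral_congr_fun measurableSet_Ioi fun u hu => ?_
    have hPadd : ∫ w in (0:ℝ)..(min u y), W (y - w) = P y - P (y - u) := by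
      rw [intervalIntegral.integral_comp_sub_left (fun x => W x) y, sub_zero]
      have : ∫ w in (y - min u y)..y, W w = P y - P (y - min u y) := by
        simp only [hP]
        rw [intervalIntegral.integral_interval_sub_left] <;> exact hM.intervalIntegrable
      rw [this]
      rcases le_total u y with h | h
      · rw [min_eq_left h]
      · rw [min_eq_right h, sub_self, hP0 0 le_rfl, hP0 (y - u) (by linarith)]
    simp only [hPadd]
  rw [hKy, hZ]
  simp only [hf] at hf0
  linarith
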